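/- arXiv:1708.06437 — 2 statements merged into one kernel-verified Lean document; each statement's English description precedes it below -/
import Mathlib

section
/- Let X and Y be independent exponentially distributed random variables with means m_x > 0 and m_y > 0, and let C > 0 be a constant with m_x ≠ C·m_y. Then E[ln(X + C·Y)] = (1/(m_x − C·m_y)) · ( m_x·(ln m_x − γ) − C·m_y·(ln(C·m_y) − γ) ), where γ is the Euler–Mascheroni constant. -/
open MeasureTheory ProbabilityTheory Real

theorem hypo_log_exp_base :
    IntegrableOn (fun t : ℝ => Real.log t * Real.exp (-t)) (Set.Ioi 0) ∧
      ∫ t in Set.Ioi (0:ℝ), Real.log t * Real.exp (-t) = -Real.eulerMascheroniConstant := by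
  have hM := (mellin_hasDerivAt_of_isBigO_rpow (E := ℂ) (a := 2) (b := 0) (s := 1)
    (f := fun t : ℝ => ((Real.exp (-t) : ℝ) : ℂ)) ?_ ?_ ?_ ?_ ?_).1
  · constructor
    · have h2 := MeasureTheory.Integrable.re hM
      refine h2.congr ?_
      refine Filter.Eventually.of_forall fun t => ?_
      simp [← Complex.ofReal_exp, ← Complex.ofReal_neg]
    · have h1 := Complex.hasDerivAt_GammaIntegral (s := 1) (by simp)
      have h3 : HasDerivAt Complex.GammaIntegral (-(Real.eulerMascheroniConstant : ℂ)) 1 := by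
        refine Complex.hasDerivAt_Gamma_one.congr_of_eventuallyEq ?_
        have : IsOpen {s : ℂ | 0 < s.re} := isOpen_lt continuous_const Complex.continuous_re
        filter_upwards [this.mem_nhds (show (1:ℂ) ∈ {s : ℂ | 0 < s.re} by simp)] with z hz
        exact (Complex.Gamma_eq_integral hz).symm
      have h4 := h1.unique h3
      simp only [sub_self, Complex.cpow_zero, one_mul] at h4
      simp only [← Complex.ofReal_mul] at h4
      rw [integral_complex_ofReal] at h4
      exact_mod_cast h4
  · refine (Continuous.continuousOn ?_).locallyIntegrableOn measurableSet_Ioi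
    exact Complex.continuous_ofReal.comp (Real.continuous_exp.comp continuous_neg)
  · rw [← Asymptotics.isBigO_norm_left]
    simp_rw [Complex.norm_real, Asymptotics.isBigO_norm_left]
    simpa only [neg_one_mul] using (isLittleO_exp_neg_mul_rpow_atTop zero_lt_one _).isBigO
  · simp
  · simp_rw [neg_zero, Real.rpow_zero]
    refine Asymptotics.isBigO_const_of_tendsto
      (?_ : Filter.Tendsto _ _ (nhds (1 : ℂ))) one_ne_zero
    rw [(by simp : (1 : ℂ) = Real.exp (-0))]
    exact (Complex.continuous_ofReal.comp
      (Real.continuous_exp.comp continuous_neg)).continuousWithinAt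
  · simp

theorem hypo_exp_int : IntegrableOn (fun t : ℝ => Real.exp (-t)) (Set.Ioi 0) := by
  simpa using integrableOn_exp_neg_Ioi 0

theorem hypo_log_exp_scaled (a : ℝ) (ha : 0 < a) :
    IntegrableOn (fun t : ℝ => Real.log t * Real.exp (-(t / a))) (Set.Ioi 0) ∧
      ∫ t in Set.Ioi (0:ℝ), Real.log t * Real.exp (-(t / a))
        = a * (Real.log a - Real.eulerMascheroniConstant) := by
  obtain ⟨hi, hv⟩ := hypo_log_exp_base
  have hfun : ∀ t ∈ Set.Ioi (0:ℝ), Real.log (a * t) * Real.exp (-(a * t / a))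
      = Real.log a * Real.exp (-t) + Real.log t * Real.exp (-t) := by
    intro t ht
    have ht : 0 < t := ht
    rw [Real.log_mul ha.ne' ht.ne', mul_div_cancel_left₀ _ ha.ne']
    ring
  constructor
  · have := (integrableOn_Ioi_comp_mul_left_iff
      (fun t : ℝ => Real.log t * Real.exp (-(t / a))) 0 ha).1
    rw [mul_zero] at this
    apply this
    refine IntegrableOn.congr_fun ((hypo_exp_int.const_mul (Real.log a)).add hi) ?_ measurableSet_Ioi
    intro t ht
    exact (hfun t ht).symm
  · have := integral_comp_mul_left_Ioi'
      (fun t : ℝ => Real.log t * Real.exp (-(t / a))) 0 ha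
    rw [mul_zero] at this
    rw [← this, setIntegral_congr_fun measurableSet_Ioi hfun,
      integral_add (hypo_exp_int.const_mul (Real.log a)) hi, hv, integral_const_mul,
      integral_exp_neg_Ioi_zero, smul_eq_mul]
    ring

theorem hypo_map_mul (r C : ℝ) (hr : 0 < r) (hC : 0 < C) :
    (expMeasure r).map (fun y => C * y) = expMeasure (r / C) := by
  have := isProbabilityMeasure_expMeasure hr
  have := isProbabilityMeasure_expMeasure (div_pos hr hC)
  have hm : Measurable (fun y : ℝ => C * y) := by fun_prop
  have : IsProbabilityMeasure ((expMeasure r).map (fun y => C * y)) :=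
    Measure.isProbabilityMeasure_map hm.aemeasurable
  apply Measure.eq_of_cdf
  ext x
  have h1 : cdf ((expMeasure r).map (fun y => C * y)) x = cdf (expMeasure r) (x / C) := by
    rw [cdf_eq_real, cdf_eq_real, map_measureReal_apply hm measurableSet_Iic]
    congr 1
    ext y
    simp [le_div_iff₀ hC, mul_comm]
  rw [h1, cdf_expMeasure_eq hr, cdf_expMeasure_eq (div_pos hr hC)]
  have : 0 ≤ x / C ↔ 0 ≤ x := by
    rw [le_div_iff₀ hC, zero_mul]
  simp only [this]
  congr 4
  ring

theorem hypo_conv_density (a b s : ℝ) (ha : 0 < a) (hb : 0 < b) (hne : a ≠ b) :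
    ((gammaPDF 1 (1 / a)) ⋆ₗ[volume] (gammaPDF 1 (1 / b))) s
      = ENNReal.ofReal ((Set.Ioi 0).indicator
        (fun s => 1 / (a - b) * (Real.exp (-(s / a)) - Real.exp (-(s / b)))) s) := by
  have hab : a - b ≠ 0 := sub_ne_zero.2 hne
  rw [lconvolution_def]
  change ∫⁻ y, exponentialPDF (1 / a) y * exponentialPDF (1 / b) (-y + s) = _
  have hfun : ∀ y, exponentialPDF (1 / a) y * exponentialPDF (1 / b) (-y + s)
      = (Set.Icc 0 s).indicator (fun y => ENNReal.ofReal
        (1 / (a * b) * Real.exp (-(s / b)) * Real.exp ((a - b) / (a * b) * y))) y := by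
    intro y
    by_cases h : y ∈ Set.Icc 0 s
    · rw [Set.indicator_of_mem h, exponentialPDF_of_nonneg h.1,
        exponentialPDF_of_nonneg (by linarith [h.2]), ← ENNReal.ofReal_mul (by positivity)]
      congr 1
      rw [mul_assoc (1 / (a * b)), ← Real.exp_add, mul_mul_mul_comm, ← Real.exp_add]
      congr 1
      · field_simp
      · congr 1
        field_simp
        ring
    · rw [Set.indicator_of_notMem h]
      simp only [Set.mem_Icc, not_and_or, not_le] at h
      rcases h with h | h
      · rw [exponentialPDF_of_neg h, zero_mul]
      · rw [exponentialPDF_of_neg (x := -y + s) (by linarith), mul_zero]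
  simp_rw [hfun]
  rw [lintegral_indicator measurableSet_Icc]
  by_cases hs : s ∈ Set.Ioi 0
  · have hs' : 0 < s := hs
    rw [Set.indicator_of_mem hs, ← ofReal_integral_eq_lintegral_ofReal]
    · congr 1
      rw [integral_Icc_eq_integral_Ioc, ← intervalIntegral.integral_of_le hs'.le]
      have hk : (a - b) / (a * b) ≠ 0 := by positivity
      rw [intervalIntegral.integral_const_mul,
        intervalIntegral.integral_comp_mul_left (fun x => Real.exp x) hk, integral_exp]
      have : Real.exp (-(s / a)) = Real.exp (-(s / b)) * Real.exp ((a - b) / (a * b) * s) := by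
        rw [← Real.exp_add]
        congr 1
        field_simp
        ring
      rw [this, mul_zero, Real.exp_zero, smul_eq_mul]
      field_simp
    · exact (Continuous.integrableOn_Icc (by fun_prop))
    · exact Filter.Eventually.of_forall fun y => by
        simp only [Pi.zero_apply]
        positivity
  · rw [Set.indicator_of_notMem hs, ENNReal.ofReal_zero]
    simp only [Set.mem_Ioi, not_lt] at hs
    rw [setLIntegral_measure_zero]
    rw [Real.volume_Icc]
    simpa using hs

/-- For independent exponential `X`, `Y` with means `m_x`, `m_y` and a constant `C > 0`
with `m_x ≠ C·m_y`:
`E[ln(X + C·Y)] = (1/(m_x - C·m_y))·(m_x·(ln m_x - γ) - C·m_y·(ln(C·m_y) - γ))`,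
where `γ` is the Euler–Mascheroni constant. -/
theorem expectation_log_hypoexponential
    {Ω : Type*} [MeasurableSpace Ω] (μ : Measure Ω) [IsProbabilityMeasure μ]
    (X Y : Ω → ℝ) (mx my C : ℝ) (hmx : 0 < mx) (hmy : 0 < my) (hC : 0 < C)
    (hne : mx ≠ C * my)
    (hXm : Measurable X) (hYm : Measurable Y)
    (hX : Measure.map X μ = expMeasure (1 / mx))
    (hY : Measure.map Y μ = expMeasure (1 / my))
    (hindep : IndepFun X Y μ) :
    ∫ ω, Real.log (X ω + C * Y ω) ∂μ
      = (1 / (mx - C * my))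
        * (mx * (Real.log mx - Real.eulerMascheroniConstant)
          - C * my * (Real.log (C * my) - Real.eulerMascheroniConstant)) := by
  set b := C * my with hbdef
  have hb : 0 < b := by positivity
  have hab : mx - b ≠ 0 := sub_ne_zero.2 hne
  have hZm : Measurable (fun ω => C * Y ω) := by fun_prop
  have hZ : Measure.map (fun ω => C * Y ω) μ = expMeasure (1 / b) := by
    have h := hypo_map_mul (1 / my) C (by positivity) hC
    rw [← hY, Measure.map_map (by fun_prop) hYm] at h
    have h2 : 1 / my / C = 1 / b := by
      rw [hbdef]
      field_simp
    rw [h2] at h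
    exact h
  have hind : IndepFun X (fun ω => C * Y ω) μ :=
    hindep.comp (φ := id) (ψ := fun y => C * y) measurable_id (by fun_prop)
  have hS : Measure.map (X + fun ω => C * Y ω) μ
      = volume.withDensity (fun s => ENNReal.ofReal ((Set.Ioi 0).indicator
        (fun s => 1 / (mx - b) * (Real.exp (-(s / mx)) - Real.exp (-(s / b)))) s)) := by
    have hg : ∀ r, Measurable (gammaPDF 1 r) := fun r => by
      unfold gammaPDF
      exact (measurable_gammaPDFReal 1 r).ennreal_ofReal
    rw [hind.map_add_eq_map_conv_map hXm hZm, hX, hZ]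
    unfold expMeasure gammaMeasure
    rw [conv_withDensity_eq_lconvolution (hg _) (hg _)]
    congr 1
    ext s
    exact hypo_conv_density mx b s hmx hb hne
  have hnn : ∀ s, 0 ≤ (Set.Ioi 0).indicator
        (fun s => 1 / (mx - b) * (Real.exp (-(s / mx)) - Real.exp (-(s / b)))) s := by
    intro s
    apply Set.indicator_nonneg
    intro s hs
    have hs : 0 < s := hs
    rcases lt_or_gt_of_ne hne with h | h
    · apply mul_nonneg_of_nonpos_of_nonpos
      · exact one_div_nonpos.2 (by linarith)
      · rw [sub_nonpos, Real.exp_le_exp, neg_le_neg_iff]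
        gcongr
    · apply mul_nonneg
      · exact one_div_nonneg.2 (by linarith)
      · rw [sub_nonneg, Real.exp_le_exp, neg_le_neg_iff]
        gcongr
  have hint : ∫ ω, Real.log (X ω + C * Y ω) ∂μ
      = ∫ s, Real.log s ∂(Measure.map (X + fun ω => C * Y ω) μ) := by
    rw [integral_map (by fun_prop) Real.measurable_log.aestronglyMeasurable]
    rfl
  obtain ⟨i1, v1⟩ := hypo_log_exp_scaled mx hmx
  obtain ⟨i2, v2⟩ := hypo_log_exp_scaled b hb
  rw [hint, hS, integral_withDensity_eq_integral_toReal_smul₀]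
  · rw [← v1, ← v2, ← integral_sub i1 i2, ← integral_const_mul,
      ← integral_indicator measurableSet_Ioi]
    congr 1
    ext s
    rw [ENNReal.toReal_ofReal (hnn s), smul_eq_mul]
    by_cases hs : s ∈ Set.Ioi (0:ℝ)
    · rw [Set.indicator_of_mem hs, Set.indicator_of_mem hs]
      ring
    · rw [Set.indicator_of_notMem hs, Set.indicator_of_notMem hs, zero_mul]
  · apply Measurable.aemeasurable
    apply Measurable.ennreal_ofReal
    exact Measurable.indicator (by fun_prop) measurableSet_Ioi
  · exact Filter.Eventually.of_forall fun s => ENNReal.ofReal_lt_top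
end

section
/- Let X and Y be independent exponentially distributed random variables with means m_x > 0 and m_y > 0, and let ξ, ρ, β > 0 be constants with ξ·m_x ≠ m_y. Then E[ ln( ξ·ρ·X·Y/(X + β) ) ] + E[ ln( ρ·X·Y/(Y + β) ) ] − E[ ln( ρ·(ξ·X + Y) ) ] = ln ρ + 2·ln( m_x·m_y/β ) − 4γ − exp(β/m_x)·∫_{β/m_x}^∞ (exp(−t)/t) dt − exp(β/m_y)·∫_{β/m_y}^∞ (exp(−t)/t) dt − (ξ/(ξ·m_x − m_y))·( m_x·(ln m_x − γ) − (m_y/ξ)·(ln(m_y/ξ) − γ) ), where γ is the Euler–Mascheroni constant. -/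
open MeasureTheory ProbabilityTheory Real

lemma aux_addf {α : Type*} [MeasurableSpace α] {ν : Measure α} {f g : α → ℝ}
    (hf : Integrable f ν) (hg : Integrable g ν) : Integrable (fun x => f x + g x) ν := hf.add hg

lemma aux_expMeasure (r : ℝ) : expMeasure r =
    (volume.restrict (Set.Ioi (0:ℝ))).withDensity (fun x => ENNReal.ofReal (r * exp (-(r * x)))) := by
  have h1 : expMeasure r = volume.withDensity (exponentialPDF r) := rfl
  rw [h1, ← Measure.restrict_congr_set (Ioi_ae_eq_Ici (a := (0:ℝ))).symm,
    ← withDensity_indicator measurableSet_Ici]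
  congr 1
  ext x
  rw [exponentialPDF_eq]
  by_cases hx : 0 ≤ x <;> simp [Set.indicator, hx]

lemma aux_integral {r : ℝ} (hr : 0 < r) (f : ℝ → ℝ) :
    ∫ x, f x ∂(expMeasure r) = ∫ x in Set.Ioi 0, r * exp (-(r * x)) * f x := by
  rw [aux_expMeasure, integral_withDensity_eq_integral_toReal_smul (by fun_prop) (by simp)]
  refine integral_congr_ae (Filter.Eventually.of_forall fun x => ?_)
  simp only [smul_eq_mul]
  rw [ENNReal.toReal_ofReal (by positivity)]

lemma aux_integrable {r : ℝ} (hr : 0 < r) (f : ℝ → ℝ) :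
    Integrable f (expMeasure r) ↔
      IntegrableOn (fun x => r * exp (-(r * x)) * f x) (Set.Ioi 0) := by
  rw [aux_expMeasure, integrable_withDensity_iff_integrable_smul' (by fun_prop) (by simp),
    IntegrableOn]
  refine integrable_congr (Filter.Eventually.of_forall fun x => ?_)
  simp only [smul_eq_mul]
  rw [ENNReal.toReal_ofReal (by positivity)]

lemma aux_pos (r : ℝ) : ∀ᵐ x ∂(expMeasure r), 0 < x := by
  rw [aux_expMeasure]
  refine (withDensity_absolutelyContinuous _ _).ae_le ?_
  exact ae_restrict_mem measurableSet_Ioi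

lemma aux_rpow {r s : ℝ} (hr : 0 < r) (hs : 0 < s) :
    Integrable (fun x => x ^ (s - 1)) (expMeasure r) := by
  rw [aux_integrable hr]
  have key := integral_rpow_mul_exp_neg_mul_Ioi hs hr
  have hint : IntegrableOn (fun x ↦ x ^ (s - 1) * rexp (-(r * x))) (Set.Ioi 0) :=
    .of_integral_ne_zero (by rw [key]; have := Gamma_pos_of_pos hs; positivity)
  refine (hint.const_mul r).congr (Filter.Eventually.of_forall fun x => ?_)
  simp only; ring

lemma aux_id {r : ℝ} (hr : 0 < r) : Integrable (fun x => x) (expMeasure r) := by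
  have := aux_rpow hr (s := 2) (by norm_num)
  norm_num at this
  exact this

lemma aux_log {r : ℝ} (hr : 0 < r) : Integrable (fun x => log x) (expMeasure r) := by
  have h1 := aux_rpow hr (s := 1/2) (by norm_num)
  refine ((h1.const_mul 2).add (aux_id hr)).mono' (by fun_prop) ?_
  filter_upwards [aux_pos r] with x hx
  have hp : 0 < x ^ ((1:ℝ)/2 - 1) := by positivity
  have e1 := Real.log_le_sub_one_of_pos hx
  have e2 := Real.log_le_sub_one_of_pos hp
  rw [Real.log_rpow hx] at e2
  simp only [Pi.add_apply]
  rw [Real.norm_eq_abs, abs_le]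
  constructor <;> linarith

lemma aux_gamma : ∫ t in Set.Ioi (0:ℝ), exp (-t) * log t = - eulerMascheroniConstant := by
  have h1 := Complex.hasDerivAt_GammaIntegral (s := 1) (by simp)
  have h2 : HasDerivAt Complex.Gamma (∫ t : ℝ in Set.Ioi 0, (t:ℂ) ^ ((1:ℂ) - 1) * (Real.log t * Real.exp (-t))) 1 := by
    refine h1.congr_of_eventuallyEq ?_
    filter_upwards [(isOpen_lt continuous_const Complex.continuous_re).mem_nhds (show (0:ℝ) < (1:ℂ).re by simp)] with s hs
    exact Complex.Gamma_eq_integral hs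
  have h3 := h2.unique Complex.hasDerivAt_Gamma_one
  simp only [sub_self, Complex.cpow_zero, one_mul, ← Complex.ofReal_mul] at h3
  rw [integral_complex_ofReal] at h3
  have h4 : ∫ t in Set.Ioi (0:ℝ), log t * exp (-t) = - eulerMascheroniConstant := by exact_mod_cast h3
  rw [← h4]; simp only [mul_comm]

lemma aux_logval {r : ℝ} (hr : 0 < r) :
    ∫ x, log x ∂(expMeasure r) = - log r - eulerMascheroniConstant := by
  have := isProbabilityMeasure_expMeasure hr
  have h : ∫ x, (log r + log x) ∂(expMeasure r) = - eulerMascheroniConstant := by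
    rw [aux_integral hr, ← aux_gamma]
    have h0 := integral_comp_mul_left_Ioi' (fun t => exp (-t) * log t) 0 hr
    rw [mul_zero] at h0
    rw [← h0, smul_eq_mul, ← integral_const_mul]
    refine setIntegral_congr_fun measurableSet_Ioi fun x hx => ?_
    simp only [Set.mem_Ioi] at hx
    rw [Real.log_mul hr.ne' hx.ne']; ring
  rw [integral_add (by fun_prop) (aux_log hr)] at h
  simp at h
  linarith

lemma aux_bound {c d x : ℝ} (hc : 0 < c) (hd : 0 < d) (hx : 0 ≤ x) :
    |log (c * x + d)| ≤ |log d| + (c * x + d) := by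
  have h1 : 0 < c * x + d := by positivity
  have h2 := Real.log_le_sub_one_of_pos h1
  have h3 : log d ≤ log (c * x + d) := Real.log_le_log hd (by nlinarith)
  have := neg_abs_le (log d)
  have := abs_nonneg (log d)
  rw [abs_le]
  constructor <;> linarith

lemma aux_logadd {r c d : ℝ} (hr : 0 < r) (hc : 0 < c) (hd : 0 < d) :
    Integrable (fun x => log (c * x + d)) (expMeasure r) := by
  have := isProbabilityMeasure_expMeasure hr
  refine ((integrable_const |log d|).add (((aux_id hr).const_mul c).add (integrable_const d))).mono' ?_ ?_
  · exact (by fun_prop : Measurable fun x => log (c * x + d)).aestronglyMeasurable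
  filter_upwards [aux_pos r] with x hx
  exact aux_bound hc hd hx.le

lemma aux_inv {r c d : ℝ} (hr : 0 < r) (hc : 0 < c) (hd : 0 < d) :
    Integrable (fun x => (c * x + d)⁻¹) (expMeasure r) := by
  have := isProbabilityMeasure_expMeasure hr
  refine (integrable_const d⁻¹).mono' ?_ ?_
  · exact (by fun_prop : Measurable fun x => (c * x + d)⁻¹).aestronglyMeasurable
  filter_upwards [aux_pos r] with x hx
  rw [Real.norm_of_nonneg (by positivity)]
  exact inv_anti₀ hd (by nlinarith)

lemma aux_ibp {r c d : ℝ} (hr : 0 < r) (hc : 0 < c) (hd : 0 < d) :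
    ∫ x, log (c * x + d) ∂(expMeasure r)
      = log d + c / r * ∫ x, (c * x + d)⁻¹ ∂(expMeasure r) := by
  have i1 := aux_logadd hr hc hd
  have i2 := (aux_inv hr hc hd).const_mul (c / r)
  have key : ∫ x, (log (c * x + d) - c / r * (c * x + d)⁻¹) ∂(expMeasure r) = log d := by
    rw [aux_integral hr]
    have := integral_Ioi_of_hasDerivAt_of_tendsto' (a := 0) (m := 0)
      (f := fun x => - exp (-(r * x)) * log (c * x + d))
      (f' := fun x => r * exp (-(r * x)) * (log (c * x + d) - c / r * (c * x + d)⁻¹)) ?_ ?_ ?_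
    · rw [this]; simp
    · intro x hx
      have hx : 0 ≤ x := hx
      have hp : c * x + d ≠ 0 := by positivity
      have d1 : HasDerivAt (fun x => c * x + d) c x := by
        simpa using ((hasDerivAt_id x).const_mul c).add_const d
      have d2 : HasDerivAt (fun x => -(r * x)) (-r) x := by
        simpa [neg_mul] using (hasDerivAt_id x).const_mul (-r)
      convert! (d2.exp.neg).mul (d1.log hp) using 1
      simp only [Pi.neg_apply]
      field_simp
      ring
    · exact (aux_integrable hr _).1 (i1.sub i2)
    · have t1 := (tendsto_rpow_mul_exp_neg_mul_atTop_nhds_zero 1 r hr).const_mul c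
      have t0 := (tendsto_rpow_mul_exp_neg_mul_atTop_nhds_zero 0 r hr).const_mul (|log d| + d)
      have t := t1.add t0
      simp only [mul_zero, add_zero] at t
      refine squeeze_zero_norm' ?_ t
      filter_upwards [Filter.eventually_ge_atTop 0] with x hx
      have := aux_bound hc hd hx
      rw [norm_mul, norm_neg, Real.norm_eq_abs (log _), Real.norm_of_nonneg (exp_nonneg _)]
      simp only [rpow_one, rpow_zero, neg_mul]
      have := mul_le_mul_of_nonneg_left this (exp_nonneg (-(r*x)))
      linarith
  rw [integral_sub i1 i2, integral_const_mul] at key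
  linarith

lemma aux_Ei {r d : ℝ} (hr : 0 < r) :
    1 / r * ∫ x, (1 * x + d)⁻¹ ∂(expMeasure r)
      = exp (d * r) * ∫ t in Set.Ioi (d * r), exp (-t) / t := by
  rw [aux_integral hr, ← integral_comp_mul_right_Ioi' _ d hr, smul_eq_mul]
  have h : ∫ x in Set.Ioi d, rexp (-(x * r)) / (x * r)
      = ∫ x in Set.Ioi 0, rexp (-((x + d) * r)) / ((x + d) * r) := by
    have := (measurePreserving_add_right (volume : Measure ℝ) d).setIntegral_preimage_emb
      (measurableEmbedding_addRight d) (fun x => rexp (-(x * r)) / (x * r)) (Set.Ioi d)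
    rw [← this]
    simp
  rw [h, ← integral_const_mul, ← integral_const_mul, ← integral_const_mul]
  refine integral_congr_ae (Filter.Eventually.of_forall fun x => ?_)
  simp only
  rw [show -((x + d) * r) = -(r * x) + -(d * r) by ring, exp_add, exp_neg (d * r)]
  have := (exp_pos (d * r)).ne'
  rw [one_mul, div_eq_mul_inv _ ((x+d)*r), mul_inv]
  field_simp

lemma aux_sum {r s c : ℝ} (hr : 0 < r) (hs : 0 < s) (hc : 0 < c) :
    Integrable (fun p : ℝ × ℝ => log (c * p.1 + p.2)) ((expMeasure r).prod (expMeasure s)) ∧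
    (r - c * s) * ∫ p, log (c * p.1 + p.2) ∂((expMeasure r).prod (expMeasure s))
      = r * (- log s - eulerMascheroniConstant)
        - c * s * (log c - log r - eulerMascheroniConstant) := by
  have := isProbabilityMeasure_expMeasure hr
  have := isProbabilityMeasure_expMeasure hs
  have p1 : ∀ᵐ p ∂((expMeasure r).prod (expMeasure s)), 0 < p.1 :=
    Measure.quasiMeasurePreserving_fst.ae (aux_pos r)
  have p2 : ∀ᵐ p ∂((expMeasure r).prod (expMeasure s)), 0 < p.2 :=
    Measure.quasiMeasurePreserving_snd.ae (aux_pos s)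
  have hF : Integrable (fun p : ℝ × ℝ => log (c * p.1 + p.2))
      ((expMeasure r).prod (expMeasure s)) := by
    refine (((aux_log hs).abs.comp_snd _).add ((((aux_id hr).const_mul c).comp_fst _).add
      ((aux_id hs).comp_snd _))).mono' ?_ ?_
    · exact (by fun_prop : Measurable fun p : ℝ × ℝ => log (c * p.1 + p.2)).aestronglyMeasurable
    filter_upwards [p1, p2] with p h1 h2
    exact aux_bound hc h2 h1.le
  refine ⟨hF, ?_⟩
  have e1 : ∀ᵐ y ∂(expMeasure s), ∫ x, log (c * x + y) ∂(expMeasure r)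
      = log y + c / r * ∫ x, (c * x + y)⁻¹ ∂(expMeasure r) := by
    filter_upwards [aux_pos s] with y hy using aux_ibp hr hc hy
  have e2 : ∀ᵐ x ∂(expMeasure r), ∫ y, log (c * x + y) ∂(expMeasure s)
      = log c + log x + 1 / s * ∫ y, (c * x + y)⁻¹ ∂(expMeasure s) := by
    filter_upwards [aux_pos r] with x hx
    have := aux_ibp hs one_pos (mul_pos hc hx)
    simp only [one_mul, add_comm _ (c * x)] at this
    rw [this, log_mul hc.ne' hx.ne']
  have hK : Integrable (fun p : ℝ × ℝ => (c * p.1 + p.2)⁻¹)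
      ((expMeasure r).prod (expMeasure s)) := by
    rw [integrable_prod_iff' (by fun_prop : Measurable fun p : ℝ × ℝ => (c * p.1 + p.2)⁻¹).aestronglyMeasurable]
    constructor
    · filter_upwards [aux_pos s] with y hy using aux_inv hr hc hy
    · refine ((hF.integral_prod_right.sub (aux_log hs)).const_mul (r / c)).congr ?_
      filter_upwards [e1, aux_pos s] with y hy hy0
      simp only [Pi.sub_apply]
      rw [hy, add_sub_cancel_left, ← mul_assoc, show r / c * (c / r) = 1 by field_simp, one_mul]
      refine integral_congr_ae ?_
      filter_upwards [aux_pos r] with x hx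
      rw [Real.norm_of_nonneg (by positivity)]
  have f1 := integral_prod_symm _ hF
  have f2 := integral_prod _ hF
  simp only at f1 f2
  rw [integral_congr_ae e1, integral_add (aux_log hs) (hK.integral_prod_right.const_mul _),
    integral_const_mul, ← integral_prod_symm _ hK, aux_logval hs] at f1
  rw [integral_congr_ae e2, integral_add (aux_addf (integrable_const _) (aux_log hr))
      (hK.integral_prod_left.const_mul _),
    integral_const_mul, ← integral_prod _ hK,
    integral_add (integrable_const _) (aux_log hr), aux_logval hr] at f2
  simp only [integral_const, probReal_univ, smul_eq_mul, one_mul] at f2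
  generalize ∫ p, log (c * p.1 + p.2) ∂((expMeasure r).prod (expMeasure s)) = F at *
  generalize ∫ p : ℝ × ℝ, (c * p.1 + p.2)⁻¹ ∂((expMeasure r).prod (expMeasure s)) = K at *
  have g1 : r * F = r * (-log s - eulerMascheroniConstant) + c * K := by
    rw [f1]; field_simp
  have g2 : s * F = s * (log c - log r - eulerMascheroniConstant) + K := by
    rw [f2]; field_simp; ring
  linear_combination g1 - c * g2

theorem asymptotic_essr_without_jamming
    {Ω : Type*} [MeasurableSpace Ω] (μ : Measure Ω) [IsProbabilityMeasure μ]
    (X Y : Ω → ℝ) (mx my ξ ρ β : ℝ)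
    (hmx : 0 < mx) (hmy : 0 < my) (hξ : 0 < ξ) (hρ : 0 < ρ) (hβ : 0 < β)
    (hne : ξ * mx ≠ my)
    (hXm : Measurable X) (hYm : Measurable Y)
    (hX : Measure.map X μ = expMeasure (1 / mx))
    (hY : Measure.map Y μ = expMeasure (1 / my))
    (hindep : IndepFun X Y μ) :
    (∫ ω, Real.log (ξ * ρ * X ω * Y ω / (X ω + β)) ∂μ)
      + (∫ ω, Real.log (ρ * X ω * Y ω / (Y ω + β)) ∂μ)
      - (∫ ω, Real.log (ρ * (ξ * X ω + Y ω)) ∂μ)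
    = Real.log ρ + 2 * Real.log (mx * my / β) - 4 * Real.eulerMascheroniConstant
      - Real.exp (β / mx) * (∫ t in Set.Ioi (β / mx), Real.exp (-t) / t)
      - Real.exp (β / my) * (∫ t in Set.Ioi (β / my), Real.exp (-t) / t)
      - ξ / (ξ * mx - my)
        * (mx * (Real.log mx - Real.eulerMascheroniConstant)
          - my / ξ * (Real.log (my / ξ) - Real.eulerMascheroniConstant)) := by
  have hr : 0 < 1 / mx := by positivity
  have hs : 0 < 1 / my := by positivity
  have hXp : ∀ᵐ ω ∂μ, 0 < X ω := by
    have := aux_pos (1 / mx)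
    rw [← hX] at this
    exact ae_of_ae_map hXm.aemeasurable this
  have hYp : ∀ᵐ ω ∂μ, 0 < Y ω := by
    have := aux_pos (1 / my)
    rw [← hY] at this
    exact ae_of_ae_map hYm.aemeasurable this
  have hXY : Measure.map (fun ω => (X ω, Y ω)) μ
      = (expMeasure (1 / mx)).prod (expMeasure (1 / my)) := by
    rw [← hX, ← hY]
    exact hindep.map_prod_eq_prod_map_map hXm.aemeasurable hYm.aemeasurable
  have trX : ∀ f : ℝ → ℝ, Measurable f → Integrable f (expMeasure (1 / mx)) →
      Integrable (fun ω => f (X ω)) μ ∧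
        ∫ ω, f (X ω) ∂μ = ∫ x, f x ∂(expMeasure (1 / mx)) := by
    intro f hf hi
    rw [← hX] at hi ⊢
    exact ⟨hi.comp_measurable hXm, (integral_map hXm.aemeasurable hf.aestronglyMeasurable).symm⟩
  have trY : ∀ f : ℝ → ℝ, Measurable f → Integrable f (expMeasure (1 / my)) →
      Integrable (fun ω => f (Y ω)) μ ∧
        ∫ ω, f (Y ω) ∂μ = ∫ x, f x ∂(expMeasure (1 / my)) := by
    intro f hf hi
    rw [← hY] at hi ⊢
    exact ⟨hi.comp_measurable hYm, (integral_map hYm.aemeasurable hf.aestronglyMeasurable).symm⟩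
  obtain ⟨iX, vX⟩ := trX (fun x => log x) (by fun_prop) (aux_log hr)
  obtain ⟨iY, vY⟩ := trY (fun x => log x) (by fun_prop) (aux_log hs)
  obtain ⟨iXb, vXb⟩ := trX (fun x => log (1 * x + β)) (by fun_prop) (aux_logadd hr one_pos hβ)
  obtain ⟨iYb, vYb⟩ := trY (fun x => log (1 * x + β)) (by fun_prop) (aux_logadd hs one_pos hβ)
  obtain ⟨iS, vS⟩ := aux_sum hr hs hξ
  rw [← hXY] at iS vS
  have iS' : Integrable (fun ω => log (ξ * X ω + Y ω)) μ :=
    iS.comp_measurable (hXm.prodMk hYm)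
  rw [integral_map (hXm.prodMk hYm).aemeasurable
    (by fun_prop : Measurable fun p : ℝ × ℝ => log (ξ * p.1 + p.2)).aestronglyMeasurable] at vS
  rw [aux_ibp hr one_pos hβ, aux_Ei hr] at vXb
  rw [aux_ibp hs one_pos hβ, aux_Ei hs] at vYb
  rw [aux_logval hr] at vX
  rw [aux_logval hs] at vY
  simp only [one_mul, one_div, log_inv, neg_neg] at vX vY vXb vYb vS iXb iYb
  simp only [← div_eq_mul_inv] at vXb vYb vS
  have E1 : ∫ ω, Real.log (ξ * ρ * X ω * Y ω / (X ω + β)) ∂μ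
      = log ξ + log ρ + ∫ ω, log (X ω) ∂μ + ∫ ω, log (Y ω) ∂μ - ∫ ω, log (X ω + β) ∂μ := by
    have : ∫ ω, Real.log (ξ * ρ * X ω * Y ω / (X ω + β)) ∂μ
        = ∫ ω, ((log ξ + log ρ + log (X ω) + log (Y ω)) - log (X ω + β)) ∂μ := by
      refine integral_congr_ae ?_
      filter_upwards [hXp, hYp] with ω h1 h2
      rw [log_div (by positivity) (by positivity), log_mul (by positivity) h2.ne',
        log_mul (by positivity) h1.ne', log_mul hξ.ne' hρ.ne']
    rw [this, integral_sub (aux_addf (aux_addf (integrable_const _) iX) iY) iXb, integral_add (aux_addf (integrable_const _) iX) iY,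
      integral_add (integrable_const _) iX]
    simp
  have E2 : ∫ ω, Real.log (ρ * X ω * Y ω / (Y ω + β)) ∂μ
      = log ρ + ∫ ω, log (X ω) ∂μ + ∫ ω, log (Y ω) ∂μ - ∫ ω, log (Y ω + β) ∂μ := by
    have : ∫ ω, Real.log (ρ * X ω * Y ω / (Y ω + β)) ∂μ
        = ∫ ω, ((log ρ + log (X ω) + log (Y ω)) - log (Y ω + β)) ∂μ := by
      refine integral_congr_ae ?_
      filter_upwards [hXp, hYp] with ω h1 h2
      rw [log_div (by positivity) (by positivity), log_mul (by positivity) h2.ne',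
        log_mul (by positivity) h1.ne']
    rw [this, integral_sub (aux_addf (aux_addf (integrable_const _) iX) iY) iYb, integral_add (aux_addf (integrable_const _) iX) iY,
      integral_add (integrable_const _) iX]
    simp
  have E3 : ∫ ω, Real.log (ρ * (ξ * X ω + Y ω)) ∂μ
      = log ρ + ∫ ω, log (ξ * X ω + Y ω) ∂μ := by
    have : ∫ ω, Real.log (ρ * (ξ * X ω + Y ω)) ∂μ
        = ∫ ω, (log ρ + log (ξ * X ω + Y ω)) ∂μ := by
      refine integral_congr_ae ?_
      filter_upwards [hXp, hYp] with ω h1 h2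
      rw [log_mul (by positivity) (by positivity)]
    rw [this, integral_add (integrable_const _) iS']
    simp
  rw [E1, E2, E3, vX, vY, vXb, vYb]
  have hne' : ξ * mx - my ≠ 0 := sub_ne_zero.2 hne
  have E4 : ∫ ω, log (ξ * X ω + Y ω) ∂μ = log ξ + ξ / (ξ * mx - my)
        * (mx * (Real.log mx - Real.eulerMascheroniConstant)
          - my / ξ * (Real.log (my / ξ) - Real.eulerMascheroniConstant)) := by
    rw [log_div hmy.ne' hξ.ne']
    generalize ∫ ω, log (ξ * X ω + Y ω) ∂μ = F at *
    field_simp at vS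
    refine mul_left_cancel₀ hne' ?_
    rw [mul_add, ← mul_assoc, mul_div_cancel₀ _ hne', mul_sub ξ, ← mul_assoc ξ (my / ξ), mul_div_cancel₀ _ hξ.ne']
    linear_combination -vS
  rw [E4, log_div (by positivity) hβ.ne', log_mul hmx.ne' hmy.ne']
  ring
end
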